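/- Let M be a von Neumann algebra. The following statements are equivalent: (i) the Lebesgue decomposition of normal positive functionals over M is unique; (ii) for all normal positive functionals 𝔱, 𝔣, 𝔤 on M, the property 𝔱 ≤ 𝔣 ≪ 𝔤 implies 𝔱 ≪ 𝔤. -/

import Mathlib

open scoped ComplexOrder

/-- Scalar multiples of elements of a von Neumann algebra stay in it. -/
instance {H : Type} [NormedAddCommGroup H] [InnerProductSpace ℂ H] [CompleteSpace H] :
    SMulMemClass (VonNeumannAlgebra H) ℂ (H →L[ℂ] H) where
  smul_mem {M} c _x hx := M.toStarSubalgebra.smul_mem hx c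

section VonNeumannDefs

variable {H : Type} [NormedAddCommGroup H] [InnerProductSpace ℂ H] [CompleteSpace H]
variable {M : VonNeumannAlgebra H}

/-- The Loewner order on bounded operators: `x ≤ y` iff `y - x` is a positive operator. -/
def OpLE (x y : H →L[ℂ] H) : Prop := (y - x).IsPositive

/-- A linear functional on a von Neumann algebra is positive if `0 ≤ 𝔣 (x⋆ * x)` for
every `x`. -/
def VNIsPos (𝔣 : ↥M →ₗ[ℂ] ℂ) : Prop := ∀ x : ↥M, 0 ≤ 𝔣 (star x * x)

/-- Order on positive functionals: `𝔣 ≤ 𝔤` iff `𝔤 - 𝔣` is positive. -/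
def VNLE (𝔣 𝔤 : ↥M →ₗ[ℂ] ℂ) : Prop := VNIsPos (𝔤 - 𝔣)

/-- A functional `𝔣` on a von Neumann algebra `M` is normal if for every norm-bounded
increasing net `x : ι → M` of positive elements of `M` having a least upper bound `xsup`
in `M` (with respect to the Loewner order), `𝔣 xsup` is the supremum of the `𝔣 (x i)`. -/
def VNIsNormal (𝔣 : ↥M →ₗ[ℂ] ℂ) : Prop :=
  ∀ (ι : Type) [Preorder ι] [IsDirected ι (· ≤ ·)] [Nonempty ι]
    (x : ι → ↥M) (xsup : ↥M),
    (∀ i, (x i : H →L[ℂ] H).IsPositive) →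
    (∀ i j, i ≤ j → OpLE (x i : H →L[ℂ] H) (x j : H →L[ℂ] H)) →
    (∃ C : ℝ, ∀ i, ‖(x i : H →L[ℂ] H)‖ ≤ C) →
    (∀ i, OpLE (x i : H →L[ℂ] H) (xsup : H →L[ℂ] H)) →
    (∀ y : ↥M, (∀ i, OpLE (x i : H →L[ℂ] H) (y : H →L[ℂ] H)) →
      OpLE (xsup : H →L[ℂ] H) (y : H →L[ℂ] H)) →
    IsLUB (Set.range fun i => 𝔣 (x i)) (𝔣 xsup)

/-- Absolute continuity `𝔣 ≪ 𝔤` for normal positive functionals: `𝔣` is the pointwise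
limit of an increasing sequence of normal positive functionals `𝔣ₙ` with `𝔣ₙ ≤ αₙ • 𝔤`
for some positive reals `αₙ`. -/
def VNAbsCont (𝔣 𝔤 : ↥M →ₗ[ℂ] ℂ) : Prop :=
  ∃ (fn : ℕ → (↥M →ₗ[ℂ] ℂ)) (α : ℕ → ℝ),
    (∀ n, VNIsPos (fn n) ∧ VNIsNormal (fn n)) ∧
    (∀ n, 0 < α n) ∧
    (∀ n, VNLE (fn n) (fn (n + 1))) ∧
    (∀ n, VNLE (fn n) (((α n : ℂ)) • 𝔤)) ∧
    (∀ x : ↥M, Filter.Tendsto (fun n => fn n x) Filter.atTop (nhds (𝔣 x)))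

/-- Singularity `𝔣 ⊥ 𝔤`: the only normal positive functional dominated by both `𝔣` and
`𝔤` is `0`. -/
def VNSingular (𝔣 𝔤 : ↥M →ₗ[ℂ] ℂ) : Prop :=
  ∀ p : ↥M →ₗ[ℂ] ℂ, VNIsPos p → VNIsNormal p → VNLE p 𝔣 → VNLE p 𝔤 → p = 0

/-- `𝔣 = 𝔣r + 𝔣s` is a Lebesgue decomposition of `𝔣` with respect to `𝔤` within the
normal positive functionals. -/
def VNIsLebDecomp (𝔣 𝔤 𝔣r 𝔣s : ↥M →ₗ[ℂ] ℂ) : Prop :=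
  VNIsPos 𝔣r ∧ VNIsNormal 𝔣r ∧ VNIsPos 𝔣s ∧ VNIsNormal 𝔣s ∧
    𝔣 = 𝔣r + 𝔣s ∧ VNAbsCont 𝔣r 𝔤 ∧ VNSingular 𝔣s 𝔤

end VonNeumannDefs

section VonNeumannGlobal

variable {H : Type} [NormedAddCommGroup H] [InnerProductSpace ℂ H] [CompleteSpace H]

/-- The Lebesgue decomposition of normal positive functionals over the von Neumann
algebra `M` is unique. -/
def VNLebDecompUnique (M : VonNeumannAlgebra H) : Prop :=
  ∀ 𝔣 𝔤 : ↥M →ₗ[ℂ] ℂ, VNIsPos 𝔣 → VNIsNormal 𝔣 → VNIsPos 𝔤 → VNIsNormal 𝔤 →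
    ∀ 𝔣r 𝔣s 𝔣r' 𝔣s' : ↥M →ₗ[ℂ] ℂ,
      VNIsLebDecomp 𝔣 𝔤 𝔣r 𝔣s → VNIsLebDecomp 𝔣 𝔤 𝔣r' 𝔣s' → 𝔣r = 𝔣r' ∧ 𝔣s = 𝔣s'

/-- A von Neumann algebra is finite if `x⋆x = 1` implies `xx⋆ = 1`. -/
def VNFinite (M : VonNeumannAlgebra H) : Prop :=
  ∀ x : ↥M, star x * x = 1 → x * star x = 1

end VonNeumannGlobal

/-
In the GNS representation of `f + g`, the functionals `f` and `g` are represented by positive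
contractions `A` and `1 - A` of the commutant. Let `P` be the projection onto the fixed vectors of
`A`, the strong limit of `A ^ n`. Since `A - A ^ (n + 1) ≤ (n + 1) • (1 - A)`, the operator `A - P`
represents an absolutely continuous part of `f`, and it is the largest one; `P` represents a
singular part.

If decompositions are unique and `p ≤ f ≪ g`, let `s` be the singular part of `p`. Then
`f - s / 2`, which lies between `f / 2` and `f`, is absolutely continuous, so that `f = f + 0` and
`f = (f - s / 2) + s / 2` are both Lebesgue decompositions and `s = 0`. Conversely, let
`f = r' + s'` be any decomposition and `r` the largest absolutely continuous part. Then `r - r'` is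
below `r`, hence absolutely continuous, and below the singular `s'`, so it vanishes.
-/

section

open Filter Topology ContinuousLinearMap
open scoped InnerProductSpace

section CStarAlgebra

variable {A : Type*} [CStarAlgebra A] [PartialOrder A] [StarOrderedRing A]

lemma antitone_pow_mul_one_sub {a : A} (h0 : 0 ≤ a) (h1 : a ≤ 1) :
    Antitone fun n : ℕ => a ^ n * (1 - a) := by
  intro k m hkm
  have hcomm : Commute (a ^ k - a ^ m) (1 - a) :=
    (Commute.one_right _).sub_right ((Commute.pow_self a k).sub_left (Commute.pow_self a m))
  simpa [sub_mul] using
    hcomm.mul_nonneg (sub_nonneg.2 (CStarAlgebra.pow_antitone h0 h1 hkm)) (sub_nonneg.2 h1)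

lemma one_sub_pow_le_nsmul_one_sub {a : A} (h0 : 0 ≤ a) (h1 : a ≤ 1) (n : ℕ) :
    1 - a ^ n ≤ n • (1 - a) := by
  rw [← geom_sum_mul_neg, Finset.sum_mul]
  simpa using Finset.sum_le_card_nsmul (Finset.range n) _ _
    fun k _ => antitone_pow_mul_one_sub h0 h1 k.zero_le

lemma norm_pow_mul_one_sub_le {a : A} (h0 : 0 ≤ a) (h1 : a ≤ 1) (n : ℕ) :
    ‖a ^ n * (1 - a)‖ ≤ 1 / (n + 1) := by
  have hnonneg : 0 ≤ a ^ n * (1 - a) := by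
    simpa [mul_sub, ← pow_succ] using CStarAlgebra.pow_antitone h0 h1 n.le_succ
  have hsum : (n + 1) • (a ^ n * (1 - a)) ≤ 1 :=
    calc (n + 1) • (a ^ n * (1 - a)) ≤ ∑ k ∈ Finset.range (n + 1), a ^ k * (1 - a) := by
          simpa using Finset.card_nsmul_le_sum (Finset.range (n + 1)) _ _ fun k hk =>
            antitone_pow_mul_one_sub h0 h1 (Nat.lt_succ_iff.1 (Finset.mem_range.1 hk))
      _ = 1 - a ^ (n + 1) := by rw [← Finset.sum_mul, geom_sum_mul_neg]
      _ ≤ 1 := sub_le_self _ (CStarAlgebra.pow_nonneg h0 _)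
  have hnorm := (CStarAlgebra.norm_le_one_iff_of_nonneg _ (nsmul_nonneg hnonneg _)).2 hsum
  rw [le_div_iff₀' (by positivity)]
  simpa [← Nat.cast_smul_eq_nsmul ℝ, norm_smul, abs_of_nonneg (by positivity : 0 ≤ (n + 1 : ℝ))]
    using hnorm

lemma mul_eq_zero_of_nonneg_of_le {c t p : A} (hc : 0 ≤ c) (hct : c ≤ t) (htp : t * p = 0) :
    c * p = 0 := by
  have hpcp : star p * c * p = 0 :=
    le_antisymm (by simpa [mul_assoc, htp] using star_left_conjugate_le_conjugate hct p)
      (star_left_conjugate_nonneg hc p)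
  obtain ⟨w, rfl⟩ := CStarAlgebra.nonneg_iff_eq_star_mul_self.1 hc
  have hwp : w * p = 0 := by
    rw [← CStarRing.star_mul_self_eq_zero_iff, ← hpcp, star_mul, mul_assoc, mul_assoc, mul_assoc]
  rw [mul_assoc, hwp, mul_zero]

lemma eq_zero_of_nonneg_of_le_of_isIdempotentElem {c t p : A} (hp : IsIdempotentElem p)
    (hc : 0 ≤ c) (hcp : c ≤ p) (hct : c ≤ t) (htp : t * p = 0) : c = 0 := by
  have h1 := mul_eq_zero_of_nonneg_of_le hc hcp hp.mul_one_sub_self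
  rwa [mul_sub, mul_eq_zero_of_nonneg_of_le hc hct htp, mul_one, sub_zero] at h1

lemma le_sub_of_isStarProjection {c t p : A} (hp : IsStarProjection p)
    (hc : IsSelfAdjoint c) (hct : c ≤ t) (hcp : c * p = 0) (hpt : p * t = p) (htp : t * p = p) :
    c ≤ t - p := by
  have hpc : p * c = 0 := by
    simpa [hp.isSelfAdjoint.star_eq, hc.star_eq] using congrArg star hcp
  simpa [hp.isSelfAdjoint.star_eq, mul_sub, sub_mul, hpc, hcp, hpt, htp, mul_assoc,
    hp.isIdempotentElem.eq] using star_left_conjugate_le_conjugate hct (1 - p)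

end CStarAlgebra

section FixedProjection

variable {K : Type*} [NormedAddCommGroup K] [InnerProductSpace ℂ K] [CompleteSpace K]
  {A T : K →L[ℂ] K}

/-- The orthogonal projection onto the space of fixed vectors `{v | A v = v}` of a bounded operator
`A`. For a positive contraction it is the strong limit of the powers of `A`. -/
noncomputable def fixedProjection (A : K →L[ℂ] K) : K →L[ℂ] K :=
  (1 - A).ker.starProjection

lemma isStarProjection_fixedProjection (A : K →L[ℂ] K) : IsStarProjection (fixedProjection A) :=
  isStarProjection_starProjection

lemma mul_fixedProjection (A : K →L[ℂ] K) : A * fixedProjection A = fixedProjection A := by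
  ext v
  have hv : fixedProjection A v ∈ (1 - A).ker := Submodule.starProjection_apply_mem _ v
  exact (sub_eq_zero.1 hv).symm

lemma fixedProjection_mul (hA : IsSelfAdjoint A) : fixedProjection A * A = fixedProjection A := by
  simpa [hA.star_eq, (isStarProjection_fixedProjection A).isSelfAdjoint.star_eq] using
    congrArg star (mul_fixedProjection A)

lemma fixedProjection_le (h0 : 0 ≤ A) : fixedProjection A ≤ A :=
  sub_nonneg.1 (le_sub_of_isStarProjection (isStarProjection_fixedProjection A) (.zero _) h0
    (zero_mul _) (fixedProjection_mul (.of_nonneg h0)) (mul_fixedProjection A))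

lemma tendsto_pow_apply_fixedProjection (h0 : 0 ≤ A) (h1 : A ≤ 1) (v : K) :
    Tendsto (fun n => (A ^ n) v) atTop (𝓝 (fixedProjection A v)) := by
  have hlip (n : ℕ) : LipschitzWith 1 (A ^ n) := by
    refine (A ^ n).lipschitz.weaken ((CStarAlgebra.nnnorm_le_one_iff_of_nonneg _ ?_).2 ?_)
    · exact CStarAlgebra.pow_nonneg h0 n
    · simpa using CStarAlgebra.pow_antitone h0 h1 n.zero_le
  have hclosed : IsClosed {w | Tendsto (fun n => (A ^ n) w) atTop (𝓝 0)} :=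
    (LipschitzWith.uniformEquicontinuous _ 1 hlip).equicontinuous.isClosed_setOfPred_tendsto
      continuous_const
  have hrange (w : K) : Tendsto (fun n => (A ^ n) ((1 - A) w)) atTop (𝓝 0) := by
    refine squeeze_zero_norm (a := fun n : ℕ => 1 / (n + 1 : ℝ) * ‖w‖) (fun n => ?_) ?_
    · exact ContinuousLinearMap.le_of_opNorm_le _ (norm_pow_mul_one_sub_le h0 h1 n) w
    · simpa using tendsto_one_div_add_atTop_nhds_zero_nat.mul_const ‖w‖
  have hmem : v - fixedProjection A v ∈ (1 - A).range.topologicalClosure := by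
    have hsa : IsSelfAdjoint (1 - A) := (IsSelfAdjoint.one _).sub (.of_nonneg h0)
    have := Submodule.sub_starProjection_mem_orthogonal (K := (1 - A).ker) v
    rwa [orthogonal_ker, hsa.adjoint_eq] at this
  have hzero : Tendsto (fun n => (A ^ n) (v - fixedProjection A v)) atTop (𝓝 0) :=
    closure_minimal (Set.range_subset_iff.2 hrange) hclosed hmem
  have hfix (n : ℕ) : (A ^ n) (fixedProjection A v) = fixedProjection A v := by
    have hpow : A ^ n * fixedProjection A = fixedProjection A := by
      induction n with
      | zero => simp
      | succ n ih => rw [pow_succ, mul_assoc, mul_fixedProjection, ih]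
    exact congrArg (· v) hpow
  simpa [hfix, map_sub] using hzero.add_const (fixedProjection A v)

lemma commute_fixedProjection (h0 : 0 ≤ A) (h1 : A ≤ 1) (hT : Commute T A) :
    Commute T (fixedProjection A) := by
  ext v
  have hTA := tendsto_pow_apply_fixedProjection h0 h1 (T v)
  have hAT := (T.continuous.tendsto _).comp (tendsto_pow_apply_fixedProjection h0 h1 v)
  refine tendsto_nhds_unique hAT (hTA.congr fun n => ?_)
  exact congrArg (· v) (hT.pow_right n).eq.symm

end FixedProjection

section GNS

variable {A : Type*} [CStarAlgebra A] [PartialOrder A] [StarOrderedRing A] {φ : A →ₚ[ℂ] ℂ}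
  {S T : φ.GNS →L[ℂ] φ.GNS}

/-- The functional `a ↦ ⟪Ω, T (π a) Ω⟫` attached to an operator `T` on the GNS space of `φ`, where
`π` is the GNS representation and `Ω`, the class of `1`, its cyclic vector. -/
noncomputable def gnsFunctional (φ : A →ₚ[ℂ] ℂ) : (φ.GNS →L[ℂ] φ.GNS) →ₗ[ℂ] A →ₗ[ℂ] ℂ :=
  LinearMap.mk₂ ℂ (fun T a => ⟪(φ.toPreGNS 1 : φ.GNS), T (φ.toPreGNS a)⟫_ℂ)
    (by simp [inner_add_right]) (by simp [inner_smul_right])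
    (by simp [UniformSpace.Completion.coe_add, inner_add_right])
    (by simp [UniformSpace.Completion.coe_smul, inner_smul_right])

/-- The commutant of the image of the GNS representation of `φ`. -/
noncomputable def gnsCommutant (φ : A →ₚ[ℂ] ℂ) : StarSubalgebra ℂ (φ.GNS →L[ℂ] φ.GNS) :=
  StarSubalgebra.centralizer ℂ (Set.range φ.gnsStarAlgHom)

lemma gnsFunctional_apply (φ : A →ₚ[ℂ] ℂ) (T : φ.GNS →L[ℂ] φ.GNS) (a : A) :
    gnsFunctional φ T a = ⟪(φ.toPreGNS 1 : φ.GNS), T (φ.toPreGNS a)⟫_ℂ := rfl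

lemma gnsStarAlgHom_apply_toPreGNS (φ : A →ₚ[ℂ] ℂ) (a b : A) :
    φ.gnsStarAlgHom a (φ.toPreGNS b) = φ.toPreGNS (a * b) := by
  simp

lemma gnsCommutant_apply_toPreGNS_mul (hT : T ∈ gnsCommutant φ) (a b : A) :
    T (φ.toPreGNS (a * b)) = φ.gnsStarAlgHom a (T (φ.toPreGNS b)) := by
  rw [← gnsStarAlgHom_apply_toPreGNS]
  have := ((StarSubalgebra.mem_centralizer_iff ℂ).1 hT _ ⟨a, rfl⟩).1
  exact congrArg (· (φ.toPreGNS b : φ.GNS)) this.symm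

lemma gnsFunctional_star_mul (hT : T ∈ gnsCommutant φ) (a b : A) :
    gnsFunctional φ T (star a * b) = ⟪(φ.toPreGNS a : φ.GNS), T (φ.toPreGNS b)⟫_ℂ := by
  rw [gnsFunctional_apply, gnsCommutant_apply_toPreGNS_mul hT, map_star, star_eq_adjoint,
    adjoint_inner_right, gnsStarAlgHom_apply_toPreGNS, mul_one]

lemma gnsFunctional_one : gnsFunctional φ 1 = φ.toLinearMap := by
  ext a
  simp [gnsFunctional_apply, PositiveLinearMap.preGNS_inner_def]

lemma gnsFunctional_star_mul_self_nonneg_iff (hT : T ∈ gnsCommutant φ) :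
    (∀ a, 0 ≤ gnsFunctional φ T (star a * a)) ↔ 0 ≤ T := by
  simp only [gnsFunctional_star_mul hT]
  refine ⟨fun h => ?_, fun h a => ((nonneg_iff_isPositive T).1 h).inner_nonneg_right _⟩
  refine (nonneg_iff_isPositive T).2 ((isPositive_iff_complex T).2 fun v => ?_)
  suffices hv : 0 ≤ ⟪v, T v⟫_ℂ by
    have hv' : 0 ≤ ⟪T v, v⟫_ℂ := by
      rw [← inner_conj_symm]
      exact star_nonneg_iff.2 hv
    exact ⟨(Complex.eq_re_of_ofReal_le hv').symm, (RCLike.nonneg_iff.1 hv').1⟩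
  induction v using UniformSpace.Completion.induction_on with
  | hp => exact isClosed_le continuous_const (continuous_id.inner T.continuous)
  | ih a => exact h a

variable {ψ : A →ₚ[ℂ] ℂ}

/-- The contraction between GNS spaces sending the class of `a` for `φ` to its class for `ψ`,
available when `ψ ≤ φ`. -/
noncomputable def gnsContraction (h : ∀ a, ψ (star a * a) ≤ φ (star a * a)) :
    φ.GNS →L[ℂ] ψ.GNS :=
  ((ψ.toPreGNS ∘ₗ φ.ofPreGNS.toLinearMap).mkContinuous 1 fun a => by
    rw [one_mul, ← sq_le_sq₀ (norm_nonneg _) (norm_nonneg _), ← Complex.real_le_real]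
    push_cast
    rw [PositiveLinearMap.preGNS_norm_sq, PositiveLinearMap.preGNS_norm_sq]
    exact h (φ.ofPreGNS a)).completion

lemma gnsContraction_toPreGNS (h : ∀ a, ψ (star a * a) ≤ φ (star a * a)) (a : A) :
    gnsContraction h (φ.toPreGNS a) = ψ.toPreGNS a := by
  simp [gnsContraction]

lemma gnsContraction_comp_gnsStarAlgHom (h : ∀ a, ψ (star a * a) ≤ φ (star a * a)) (a : A) :
    gnsContraction h ∘L φ.gnsStarAlgHom a = ψ.gnsStarAlgHom a ∘L gnsContraction h := by
  ext v
  induction v using UniformSpace.Completion.induction_on with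
  | hp => exact isClosed_eq (map_continuous _) (map_continuous _)
  | ih b =>
    obtain ⟨b, rfl⟩ := φ.toPreGNS.surjective b
    simp [gnsContraction_toPreGNS]

lemma exists_gnsFunctional_eq_of_le (h : ∀ a, ψ (star a * a) ≤ φ (star a * a)) :
    ∃ T ∈ gnsCommutant φ, gnsFunctional φ T = ψ.toLinearMap := by
  set V := gnsContraction h
  have hV (a : A) : φ.gnsStarAlgHom a ∘L adjoint V = adjoint V ∘L ψ.gnsStarAlgHom a := by
    have := congrArg adjoint (gnsContraction_comp_gnsStarAlgHom h (star a))
    simpa [adjoint_comp, map_star, star_eq_adjoint] using this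
  have hcomm (a : A) : φ.gnsStarAlgHom a * (adjoint V ∘L V) =
      adjoint V ∘L V * φ.gnsStarAlgHom a := by
    rw [mul_def, mul_def, ← comp_assoc, hV, comp_assoc, comp_assoc,
      gnsContraction_comp_gnsStarAlgHom]
  refine ⟨adjoint V ∘L V, ?_, ?_⟩
  · refine (StarSubalgebra.mem_centralizer_iff ℂ).2 ?_
    rintro _ ⟨a, rfl⟩
    exact ⟨hcomm a, by rw [← map_star]; exact hcomm (star a)⟩
  · ext a
    simp [gnsFunctional_apply, adjoint_inner_right, V, gnsContraction_toPreGNS,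
      PositiveLinearMap.preGNS_inner_def]

end GNS

section VonNeumann

variable {H : Type} [NormedAddCommGroup H] [InnerProductSpace ℂ H] [CompleteSpace H]
  {M : VonNeumannAlgebra H}

-- Local, because through the C⋆-algebra structure it brings a second `Module ℂ M` into scope.
local instance (M : VonNeumannAlgebra H) : IsClosed (M : Set (H →L[ℂ] H)) := by
  rw [← M.centralizer_centralizer]
  exact Set.isClosed_centralizer _

lemma sqrt_mem_vonNeumannAlgebra {a : H →L[ℂ] H} (ha : a ∈ M) : CFC.sqrt a ∈ M := by
  have hcomm : ∀ b ∈ M.commutant, CFC.sqrt a * b = b * CFC.sqrt a := fun b hb =>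
    Commute.cfcₙ_nnreal (show Commute a b from VonNeumannAlgebra.mem_commutant_iff.1 hb a ha)
      NNReal.sqrt
  rw [← M.commutant_commutant]
  exact VonNeumannAlgebra.mem_commutant_iff.2 fun b hb => (hcomm b hb).symm

local instance (M : VonNeumannAlgebra H) : StarOrderedRing M :=
  StarOrderedRing.of_nonneg_iff' (fun h z => add_le_add_right (α := H →L[ℂ] H) h z) fun a => by
    refine ⟨fun ha => ?_, ?_⟩
    · refine ⟨⟨CFC.sqrt (a : H →L[ℂ] H), sqrt_mem_vonNeumannAlgebra a.2⟩, Subtype.ext ?_⟩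
      change (a : H →L[ℂ] H) = star (CFC.sqrt (a : H →L[ℂ] H)) * CFC.sqrt (a : H →L[ℂ] H)
      rw [(CFC.sqrt_nonneg _).isSelfAdjoint.star_eq, CFC.sqrt_mul_sqrt_self (a : H →L[ℂ] H) ha]
    · rintro ⟨b, rfl⟩
      exact star_mul_self_nonneg (b : H →L[ℂ] H)

variable {f g k p s : M →ₗ[ℂ] ℂ} {c d : ℂ}

lemma VNIsPos.apply_nonneg (hf : VNIsPos f) {a : M} (ha : 0 ≤ a) : 0 ≤ f a := by
  obtain ⟨b, rfl⟩ := CStarAlgebra.nonneg_iff_eq_star_mul_self.1 ha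
  exact hf b

lemma VNIsPos.add (hf : VNIsPos f) (hg : VNIsPos g) : VNIsPos (f + g) :=
  fun a => add_nonneg (hf a) (hg a)

lemma VNIsPos.smul (hc : 0 ≤ c) (hf : VNIsPos f) : VNIsPos (c • f) :=
  fun a => mul_nonneg hc (hf a)

lemma vnle_iff : VNLE f g ↔ ∀ a, f (star a * a) ≤ g (star a * a) := by
  simp only [VNLE, VNIsPos, LinearMap.sub_apply, sub_nonneg]

lemma vnle_zero_left : VNLE 0 f ↔ VNIsPos f := by rw [VNLE, sub_zero]

lemma VNLE.refl (f : M →ₗ[ℂ] ℂ) : VNLE f f := vnle_iff.2 fun _ => le_rfl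

lemma VNLE.trans (hfg : VNLE f g) (hgk : VNLE g k) : VNLE f k :=
  vnle_iff.2 fun a => (vnle_iff.1 hfg a).trans (vnle_iff.1 hgk a)

lemma VNLE.antisymm (hfg : VNLE f g) (hgf : VNLE g f) : f = g := by
  refine LinearMap.ext_on CStarAlgebra.span_nonneg fun a ha => ?_
  have hle := hfg.apply_nonneg ha
  have hge := hgf.apply_nonneg ha
  rw [LinearMap.sub_apply, sub_nonneg] at hle hge
  exact hle.antisymm hge

lemma VNLE.smul (hc : 0 ≤ c) (hfg : VNLE f g) : VNLE (c • f) (c • g) := by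
  rw [VNLE, ← smul_sub]
  exact VNIsPos.smul hc hfg

lemma VNIsPos.smul_vnle_smul (hf : VNIsPos f) (hcd : c ≤ d) : VNLE (c • f) (d • f) := by
  rw [VNLE, ← sub_smul]
  exact hf.smul (sub_nonneg.2 hcd)

lemma VNIsPos.vnle_add_right (hg : VNIsPos g) : VNLE f (f + g) := by
  rwa [VNLE, add_sub_cancel_left]

lemma VNIsPos.vnle_add_left (hf : VNIsPos f) : VNLE g (f + g) := by
  rwa [VNLE, add_sub_cancel_right]

lemma vnle_of_tendsto {u : ℕ → M →ₗ[ℂ] ℂ} (hu : ∀ a, Tendsto (fun n => u n a) atTop (𝓝 (f a)))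
    (hug : ∀ n, VNLE (u n) g) : VNLE f g :=
  vnle_iff.2 fun a => le_of_tendsto' (hu _) fun n => vnle_iff.1 (hug n) a

lemma vnle_of_monotone_of_tendsto {u : ℕ → M →ₗ[ℂ] ℂ} (hmono : ∀ n, VNLE (u n) (u (n + 1)))
    (hu : ∀ a, Tendsto (fun n => u n a) atTop (𝓝 (f a))) (n : ℕ) : VNLE (u n) f :=
  vnle_iff.2 fun a =>
    (monotone_nat_of_le_succ fun m => vnle_iff.1 (hmono m) a).ge_of_tendsto (hu _) n

lemma VNIsNormal.of_vnle (hf : VNIsNormal f) (hp : VNIsPos p) (hpf : VNLE p f) :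
    VNIsNormal p := by
  intro ι _ _ _ x x' hx hmono hbdd hub hleast
  have hx' (i : ι) : 0 ≤ x' - x i := (nonneg_iff_isPositive _).2 (hub i)
  refine ⟨?_, fun b hb => ?_⟩
  · rintro _ ⟨i, rfl⟩
    simpa [sub_nonneg] using hp.apply_nonneg (hx' i)
  · -- `p = f - (f - p)`, and `f - p` is increasing along the net.
    have hbound : f x' ≤ f x' - p x' + b := by
      refine (hf ι x x' hx hmono hbdd hub hleast).2 ?_
      rintro _ ⟨i, rfl⟩
      have hi : f (x i) - p (x i) ≤ f x' - p x' := by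
        simpa only [map_sub, sub_nonneg, LinearMap.sub_apply] using hpf.apply_nonneg (hx' i)
      simpa using add_le_add hi (hb ⟨i, rfl⟩)
    simpa [sub_add, sub_nonneg] using hbound

lemma VNIsNormal.smul {r : ℝ} (hr : 0 < r) (hf : VNIsNormal f) : VNIsNormal ((r : ℂ) • f) := by
  have hr' : (0 : ℂ) < r := by exact_mod_cast hr
  intro ι _ _ _ x x' hx hmono hbdd hub hleast
  have hlub := hf ι x x' hx hmono hbdd hub hleast
  refine ⟨?_, fun b hb => ?_⟩
  · rintro _ ⟨i, rfl⟩
    exact mul_le_mul_of_nonneg_left (hlub.1 ⟨i, rfl⟩) hr'.le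
  · have hbound : f x' ≤ (r : ℂ)⁻¹ * b := by
      refine hlub.2 ?_
      rintro _ ⟨i, rfl⟩
      exact (le_inv_mul_iff₀ hr').2 (hb ⟨i, rfl⟩)
    exact (le_inv_mul_iff₀ hr').1 hbound

lemma VNSingular.eq_zero_of_vnle_smul {r : ℝ} (hs : VNSingular s g) (hg : VNIsPos g)
    (hp : VNIsPos p) (hpn : VNIsNormal p) (hps : VNLE p s) (hr : 0 ≤ r)
    (hpg : VNLE p ((r : ℂ) • g)) : p = 0 := by
  obtain ⟨d, hd, hd1, hdr⟩ : ∃ d : ℝ, 0 < d ∧ d ≤ 1 ∧ d * r ≤ 1 :=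
    ⟨(1 + r)⁻¹, by positivity, inv_le_one_of_one_le₀ (by linarith),
      by rw [inv_mul_le_iff₀ (by positivity)]; linarith⟩
  have hd0 : (0 : ℂ) ≤ d := by exact_mod_cast hd.le
  have hdp : VNLE ((d : ℂ) • p) p := by
    simpa using hp.smul_vnle_smul (show (d : ℂ) ≤ 1 by exact_mod_cast hd1)
  have hdg : VNLE ((d : ℂ) • p) g := by
    have h := hg.smul_vnle_smul (show (d * r : ℂ) ≤ 1 by exact_mod_cast hdr)
    rw [mul_smul, one_smul] at h
    exact (hpg.smul hd0).trans h
  have hzero := hs _ (hp.smul hd0) (hpn.of_vnle (hp.smul hd0) hdp) (hdp.trans hps) hdg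
  exact (smul_eq_zero.1 hzero).resolve_left (by exact_mod_cast hd.ne')

lemma VNAbsCont.vnle_of_forall (hfg : VNAbsCont f g)
    (h : ∀ (q : M →ₗ[ℂ] ℂ) (r : ℝ), VNIsPos q → VNIsNormal q → VNLE q f → 0 ≤ r →
      VNLE q ((r : ℂ) • g) → VNLE q k) : VNLE f k := by
  obtain ⟨u, α, hu, hα, hmono, hug, hlim⟩ := hfg
  exact vnle_of_tendsto hlim fun n => h (u n) (α n) (hu n).1 (hu n).2
    (vnle_of_monotone_of_tendsto hmono hlim n) (hα n).le (hug n)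

lemma VNAbsCont.smul {r : ℝ} (hr : 0 < r) (hfg : VNAbsCont f g) : VNAbsCont ((r : ℂ) • f) g := by
  have hr' : (0 : ℂ) ≤ r := by exact_mod_cast hr.le
  obtain ⟨u, α, hu, hα, hmono, hug, hlim⟩ := hfg
  refine ⟨fun n => (r : ℂ) • u n, fun n => r * α n,
    fun n => ⟨(hu n).1.smul hr', (hu n).2.smul hr⟩, fun n => mul_pos hr (hα n),
    fun n => (hmono n).smul hr', fun n => ?_, fun a => (hlim a).const_mul _⟩
  simpa only [Complex.ofReal_mul, mul_smul] using (hug n).smul hr'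

lemma VNSingular.eq_zero_of_absCont (hsg : VNSingular s g) (hg : VNIsPos g) (hp : VNIsPos p)
    (hps : VNLE p s) (hpg : VNAbsCont p g) : p = 0 := by
  refine VNLE.antisymm (hpg.vnle_of_forall fun q r hq hqn hqp hr hqg => ?_) (vnle_zero_left.2 hp)
  rw [hsg.eq_zero_of_vnle_smul hg hq hqn (hqp.trans hps) hr hqg]
  exact VNLE.refl 0

/-- A positive functional in the sense of `VNIsPos`, bundled as a positive linear map. -/
noncomputable def VNIsPos.toPositiveLinearMap (hf : VNIsPos f) : M →ₚ[ℂ] ℂ :=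
  PositiveLinearMap.mk₀ f fun _ => hf.apply_nonneg

section Gns

variable {φ : M →ₚ[ℂ] ℂ} {A P S T : φ.GNS →L[ℂ] φ.GNS}

lemma vnIsPos_gnsFunctional_iff (hT : T ∈ gnsCommutant φ) :
    VNIsPos (gnsFunctional φ T) ↔ 0 ≤ T :=
  gnsFunctional_star_mul_self_nonneg_iff hT

lemma vnle_gnsFunctional_iff (hS : S ∈ gnsCommutant φ) (hT : T ∈ gnsCommutant φ) :
    VNLE (gnsFunctional φ S) (gnsFunctional φ T) ↔ S ≤ T := by
  rw [VNLE, ← map_sub, vnIsPos_gnsFunctional_iff (sub_mem hT hS), sub_nonneg]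

lemma vnIsNormal_gnsFunctional_of_le (hTn : VNIsNormal (gnsFunctional φ T))
    (hT : T ∈ gnsCommutant φ) (hS : S ∈ gnsCommutant φ) (hS0 : 0 ≤ S) (hST : S ≤ T) :
    VNIsNormal (gnsFunctional φ S) :=
  hTn.of_vnle ((vnIsPos_gnsFunctional_iff hS).2 hS0) ((vnle_gnsFunctional_iff hS hT).2 hST)

lemma exists_gnsFunctional_eq_of_vnle (hp : VNIsPos p) (hpT : VNLE p (gnsFunctional φ T))
    (hT : T ∈ gnsCommutant φ) (hT1 : T ≤ 1) :
    ∃ C ∈ gnsCommutant φ, 0 ≤ C ∧ C ≤ T ∧ gnsFunctional φ C = p := by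
  have hle : VNLE p φ.toLinearMap := by
    rw [← gnsFunctional_one]
    exact hpT.trans ((vnle_gnsFunctional_iff hT (one_mem _)).2 hT1)
  obtain ⟨C, hC, hCp⟩ :=
    exists_gnsFunctional_eq_of_le (ψ := hp.toPositiveLinearMap) (vnle_iff.1 hle)
  change gnsFunctional φ C = p at hCp
  subst hCp
  exact ⟨C, hC, (vnIsPos_gnsFunctional_iff hC).1 hp, (vnle_gnsFunctional_iff hC hT).1 hpT, rfl⟩

lemma fixedProjection_mem_gnsCommutant (h0 : 0 ≤ A) (h1 : A ≤ 1) (hA : A ∈ gnsCommutant φ) :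
    fixedProjection A ∈ gnsCommutant φ := by
  refine (StarSubalgebra.mem_centralizer_iff ℂ).2 fun T hT => ?_
  obtain ⟨hTA, hTA'⟩ := (StarSubalgebra.mem_centralizer_iff ℂ).1 hA T hT
  exact ⟨commute_fixedProjection h0 h1 hTA, commute_fixedProjection h0 h1 hTA'⟩

lemma vnSingular_gnsFunctional (hP : IsStarProjection P) (hPM : P ∈ gnsCommutant φ)
    (hT : T ∈ gnsCommutant φ) (hTP : T * P = 0) :
    VNSingular (gnsFunctional φ P) (gnsFunctional φ T) := by
  intro p hp _ hpP hpT
  obtain ⟨C, hC, h0, hCP, rfl⟩ := exists_gnsFunctional_eq_of_vnle hp hpP hPM hP.le_one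
  rw [eq_zero_of_nonneg_of_le_of_isIdempotentElem hP.isIdempotentElem h0 hCP
    ((vnle_gnsFunctional_iff hC hT).1 hpT) hTP, map_zero]

lemma vnAbsCont_gnsFunctional_sub_fixedProjection (h0 : 0 ≤ A) (h1 : A ≤ 1)
    (hA : A ∈ gnsCommutant φ) (hAn : VNIsNormal (gnsFunctional φ A)) :
    VNAbsCont (gnsFunctional φ (A - fixedProjection A)) (gnsFunctional φ (1 - A)) := by
  have hmem (n : ℕ) : A - A ^ (n + 1) ∈ gnsCommutant φ := sub_mem hA (pow_mem hA _)
  have hpos (n : ℕ) : VNIsPos (gnsFunctional φ (A - A ^ (n + 1))) := by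
    rw [vnIsPos_gnsFunctional_iff (hmem n), sub_nonneg]
    simpa using CStarAlgebra.pow_antitone h0 h1 (Nat.le_add_left 1 n)
  refine ⟨fun n => gnsFunctional φ (A - A ^ (n + 1)), fun n => n + 1,
    fun n => ⟨hpos n, hAn.of_vnle (hpos n) ?_⟩, fun n => by positivity, fun n => ?_, fun n => ?_,
    fun a => ?_⟩
  · exact (vnle_gnsFunctional_iff (hmem n) hA).2 (sub_le_self _ (CStarAlgebra.pow_nonneg h0 _))
  · exact (vnle_gnsFunctional_iff (hmem n) (hmem _)).2
      (sub_le_sub_left (CStarAlgebra.pow_antitone h0 h1 (Nat.le_succ _)) A)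
  · rw [← map_smul, vnle_gnsFunctional_iff (hmem n)
      (SMulMemClass.smul_mem _ (sub_mem (one_mem _) hA))]
    calc A - A ^ (n + 1) ≤ 1 - A ^ (n + 1) := sub_le_sub_right h1 _
      _ ≤ (n + 1) • (1 - A) := one_sub_pow_le_nsmul_one_sub h0 h1 _
      _ = ((n + 1 : ℝ) : ℂ) • (1 - A) := by rw [← Nat.cast_smul_eq_nsmul ℂ]; push_cast; rfl
  · have hlim := tendsto_pow_apply_fixedProjection h0 h1 (φ.toPreGNS a)
    exact tendsto_const_nhds.inner
      (tendsto_const_nhds.sub (hlim.comp (tendsto_add_atTop_nat 1)))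

lemma vnle_gnsFunctional_sub_fixedProjection (h0 : 0 ≤ A) (h1 : A ≤ 1)
    (hA : A ∈ gnsCommutant φ) (hpA : VNLE p (gnsFunctional φ A))
    (hpg : VNAbsCont p (gnsFunctional φ (1 - A))) :
    VNLE p (gnsFunctional φ (A - fixedProjection A)) := by
  refine hpg.vnle_of_forall fun q r hq _ hqp _ hqg => ?_
  obtain ⟨C, hC, hC0, hCA, rfl⟩ := exists_gnsFunctional_eq_of_vnle hq (hqp.trans hpA) hA h1
  have hA' : (1 - A) ∈ gnsCommutant φ := sub_mem (one_mem _) hA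
  have hCr : C ≤ (r : ℂ) • (1 - A) := by
    rwa [← map_smul, vnle_gnsFunctional_iff hC (SMulMemClass.smul_mem _ hA')] at hqg
  have hCP : C * fixedProjection A = 0 :=
    mul_eq_zero_of_nonneg_of_le hC0 hCr
      (by rw [smul_mul_assoc, sub_mul, one_mul, mul_fixedProjection, sub_self, smul_zero])
  refine (vnle_gnsFunctional_iff hC (sub_mem hA (fixedProjection_mem_gnsCommutant h0 h1 hA))).2 ?_
  exact le_sub_of_isStarProjection (isStarProjection_fixedProjection A) (.of_nonneg hC0) hCA hCP
    (fixedProjection_mul (.of_nonneg h0)) (mul_fixedProjection A)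

lemma VNIsPos.exists_gnsFunctional (hf : VNIsPos f) (hg : VNIsPos g) :
    ∃ (φ : M →ₚ[ℂ] ℂ), ∃ A ∈ gnsCommutant φ, 0 ≤ A ∧ A ≤ 1 ∧
      gnsFunctional φ A = f ∧ gnsFunctional φ (1 - A) = g := by
  obtain ⟨φ, hφ⟩ : ∃ φ : M →ₚ[ℂ] ℂ, φ.toLinearMap = f + g :=
    ⟨(hf.add hg).toPositiveLinearMap, rfl⟩
  have hone : gnsFunctional φ 1 = f + g := gnsFunctional_one.trans hφ
  obtain ⟨A, hA, h0, h1, hAf⟩ :=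
    exists_gnsFunctional_eq_of_vnle hf (hone ▸ hg.vnle_add_right) (one_mem _) le_rfl
  exact ⟨φ, A, hA, h0, h1, hAf, by rw [map_sub, hAf, hone, add_sub_cancel_left]⟩

lemma vnIsLebDecomp_gnsFunctional (h0 : 0 ≤ A) (h1 : A ≤ 1) (hA : A ∈ gnsCommutant φ)
    (hAn : VNIsNormal (gnsFunctional φ A)) :
    VNIsLebDecomp (gnsFunctional φ A) (gnsFunctional φ (1 - A))
      (gnsFunctional φ (A - fixedProjection A)) (gnsFunctional φ (fixedProjection A)) := by
  have hP := isStarProjection_fixedProjection A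
  have hPM := fixedProjection_mem_gnsCommutant h0 h1 hA
  have hPA := fixedProjection_le h0
  have hM := sub_mem hA hPM
  have hM0 := sub_nonneg.2 hPA
  refine ⟨(vnIsPos_gnsFunctional_iff hM).2 hM0,
    vnIsNormal_gnsFunctional_of_le hAn hA hM hM0 (sub_le_self _ hP.nonneg),
    (vnIsPos_gnsFunctional_iff hPM).2 hP.nonneg,
    vnIsNormal_gnsFunctional_of_le hAn hA hPM hP.nonneg hPA,
    by rw [← map_add, sub_add_cancel],
    vnAbsCont_gnsFunctional_sub_fixedProjection h0 h1 hA hAn,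
    vnSingular_gnsFunctional hP hPM (sub_mem (one_mem _) hA) ?_⟩
  rw [sub_mul, one_mul, mul_fixedProjection, sub_self]

end Gns

theorem exists_maximal_vnIsLebDecomp (hf : VNIsPos f) (hfn : VNIsNormal f) (hg : VNIsPos g) :
    ∃ r s, VNIsLebDecomp f g r s ∧ VNSingular s r ∧
      ∀ p, VNLE p f → VNAbsCont p g → VNLE p r := by
  obtain ⟨φ, A, hA, h0, h1, rfl, rfl⟩ := hf.exists_gnsFunctional hg
  have hP := isStarProjection_fixedProjection A
  have hPM := fixedProjection_mem_gnsCommutant h0 h1 hA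
  refine ⟨_, _, vnIsLebDecomp_gnsFunctional h0 h1 hA hfn,
    vnSingular_gnsFunctional hP hPM (sub_mem hA hPM) ?_,
    fun p => vnle_gnsFunctional_sub_fixedProjection h0 h1 hA⟩
  rw [sub_mul, mul_fixedProjection, hP.isIdempotentElem.eq, sub_self]

lemma VNSingular.of_vnle (hsg : VNSingular s g) (hps : VNLE p s) : VNSingular p g :=
  fun q hq hqn hqp hqg => hsg q hq hqn (hqp.trans hps) hqg

-- Take the maximal absolutely continuous part `k` of `p = k + s`. Since `r⁻¹ • f ≤ p` is absolutely
-- continuous, `f ≤ r • k`, so `s ≤ r • k` while `s ⊥ k`.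
lemma VNAbsCont.of_vnle_of_vnle_smul {r : ℝ} (hfg : VNAbsCont f g) (hfn : VNIsNormal f)
    (hg : VNIsPos g) (hp : VNIsPos p) (hr : 0 < r) (hpf : VNLE p f)
    (hfp : VNLE f ((r : ℂ) • p)) : VNAbsCont p g := by
  obtain ⟨k, s, ⟨hk, -, hs, hsn, rfl, hkg, -⟩, hsk, hmax⟩ :=
    exists_maximal_vnIsLebDecomp hp (hfn.of_vnle hp hpf) hg
  have hr0 : (r : ℂ) ≠ 0 := by exact_mod_cast hr.ne'
  have hfp' : VNLE (((r⁻¹ : ℝ) : ℂ) • f) (k + s) := by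
    have hrinv : (0 : ℂ) ≤ (r⁻¹ : ℝ) := by exact_mod_cast (inv_pos.2 hr).le
    simpa only [Complex.ofReal_inv, inv_smul_smul₀ hr0] using hfp.smul hrinv
  have hfk : VNLE f ((r : ℂ) • k) := by
    simpa only [Complex.ofReal_inv, smul_inv_smul₀ hr0] using
      (hmax _ hfp' (hfg.smul (inv_pos.2 hr))).smul (c := r) (by exact_mod_cast hr.le)
  have hs0 : s = 0 :=
    hsk.eq_zero_of_vnle_smul hk hs hsn (.refl s) hr.le (hk.vnle_add_left.trans (hpf.trans hfk))
  rwa [hs0, add_zero]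

lemma VNLebDecompUnique.absCont_of_vnle (huniq : VNLebDecompUnique M) (hp : VNIsPos p)
    (hf : VNIsPos f) (hfn : VNIsNormal f) (hg : VNIsPos g) (hgn : VNIsNormal g)
    (hpf : VNLE p f) (hfg : VNAbsCont f g) : VNAbsCont p g := by
  obtain ⟨r, s, ⟨hr, -, hs, hsn, rfl, hrg, hsg⟩, -, -⟩ :=
    exists_maximal_vnIsLebDecomp hp (hfn.of_vnle hp hpf) hg
  have hsf : VNLE s f := hr.vnle_add_left.trans hpf
  have hhalf : VNIsPos ((2⁻¹ : ℂ) • s) := hs.smul (by positivity)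
  have hhalf_le : VNLE ((2⁻¹ : ℂ) • s) s := by
    simpa only [one_smul] using hs.smul_vnle_smul (c := 2⁻¹) (d := 1) (by norm_num)
  have hf' : VNIsPos (f - (2⁻¹ : ℂ) • s) := hhalf_le.trans hsf
  have hf'f : VNLE (f - (2⁻¹ : ℂ) • s) f := by rwa [VNLE, sub_sub_cancel]
  have hff' : VNLE f (((2 : ℝ) : ℂ) • (f - (2⁻¹ : ℂ) • s)) := by
    have hsub : ((2 : ℝ) : ℂ) • (f - (2⁻¹ : ℂ) • s) - f = f - s := by
      push_cast
      module
    rwa [VNLE, hsub]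
  have hf'g : VNAbsCont (f - (2⁻¹ : ℂ) • s) g :=
    hfg.of_vnle_of_vnle_smul hfn hg hf' two_pos hf'f hff'
  have hzero : VNIsPos (0 : M →ₗ[ℂ] ℂ) := fun _ => le_rfl
  have h0s : VNLE 0 s := vnle_zero_left.2 hs
  have hs0 : (2⁻¹ : ℂ) • s = 0 :=
    (huniq f g hf hfn hg hgn _ _ _ _
      ⟨hf', hfn.of_vnle hf' hf'f, hhalf, hsn.of_vnle hhalf hhalf_le, (sub_add_cancel _ _).symm,
        hf'g, hsg.of_vnle hhalf_le⟩
      ⟨hf, hfn, hzero, hsn.of_vnle hzero h0s, (add_zero f).symm, hfg, hsg.of_vnle h0s⟩).2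
  rwa [(smul_eq_zero.1 hs0).resolve_left (by norm_num), add_zero]

lemma vnLebDecompUnique_of_absCont_of_vnle
    (h : ∀ p f g : M →ₗ[ℂ] ℂ, VNIsPos p → VNIsNormal p → VNIsPos f → VNIsNormal f →
      VNIsPos g → VNIsNormal g → VNLE p f → VNAbsCont f g → VNAbsCont p g) :
    VNLebDecompUnique M := by
  intro f g hf hfn hg hgn
  obtain ⟨r, s, ⟨hr, hrn, hs, -, hrs, hrg, -⟩, -, hmax⟩ := exists_maximal_vnIsLebDecomp hf hfn hg
  have hunique {r' s' : M →ₗ[ℂ] ℂ} (h' : VNIsLebDecomp f g r' s') : r' = r ∧ s' = s := by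
    obtain ⟨hr', -, hs', -, hrs', hrg', hsg'⟩ := h'
    have hle : VNLE r' r := hmax r' (hrs' ▸ hs'.vnle_add_right) hrg'
    have hdiff : VNLE (r - r') r := by rwa [VNLE, sub_sub_cancel]
    have hsdiff : s' - (r - r') = s := by
      rw [sub_sub_eq_add_sub, add_comm, ← hrs', hrs, add_sub_cancel_left]
    have hdiff' : VNLE (r - r') s' := by rwa [VNLE, hsdiff]
    have hzero : r - r' = 0 := hsg'.eq_zero_of_absCont hg hle hdiff'
      (h _ r g hle (hrn.of_vnle hle hdiff) hr hrn hg hgn hdiff hrg)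
    obtain rfl : r = r' := sub_eq_zero.1 hzero
    exact ⟨rfl, add_left_cancel (hrs'.symm.trans hrs)⟩
  intro r₁ s₁ r₂ s₂ h₁ h₂
  exact ⟨(hunique h₁).1.trans (hunique h₂).1.symm, (hunique h₁).2.trans (hunique h₂).2.symm⟩

end VonNeumann

end

/-- **Lemma 2.12**: for a von Neumann algebra `M`, the Lebesgue decomposition of normal
positive functionals over `M` is unique iff `𝔱 ≤ 𝔣 ≪ 𝔤` implies `𝔱 ≪ 𝔤` for all normal
positive functionals `𝔱, 𝔣, 𝔤` on `M`. -/
theorem vN_lebesgue_unique_iff_le_absCont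
    {H : Type} [NormedAddCommGroup H] [InnerProductSpace ℂ H] [CompleteSpace H]
    (M : VonNeumannAlgebra H) :
    VNLebDecompUnique M ↔
      ∀ 𝔱 𝔣 𝔤 : ↥M →ₗ[ℂ] ℂ,
        VNIsPos 𝔱 → VNIsNormal 𝔱 → VNIsPos 𝔣 → VNIsNormal 𝔣 →
        VNIsPos 𝔤 → VNIsNormal 𝔤 →
        VNLE 𝔱 𝔣 → VNAbsCont 𝔣 𝔤 → VNAbsCont 𝔱 𝔤 :=
  ⟨fun h _ _ _ hp _ hf hfn hg hgn hpf hfg => h.absCont_of_vnle hp hf hfn hg hgn hpf hfg,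
    vnLebDecompUnique_of_absCont_of_vnle⟩
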